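/- arXiv:0802.2554 — 5 statements merged into one kernel-verified Lean document; each statement's English description precedes it below -/
import Mathlib

section
/- Let F be a free non-abelian group and let H ≤ F be a cyclic subgroup. Then there exists a free non-abelian subgroup F̃ ≤ F such that F̃ ∩ H is trivial. -/
/-!
For distinct basis elements `a`, `b` of `F`, the conjugates `aⁱ b a⁻ⁱ` (`i : ℤ`) freely generate a
subgroup of `F`: the homomorphism from `F` to `FreeGroup ℤ ⋊ Perm ℤ` sending `a` to the shift and
`b` to the `0`-th generator maps them to the standard generators. Splitting four of these
conjugates into two pairs gives non-abelian free subgroups `A`, `B` with `A ⊓ B = ⊥`. A cyclic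
subgroup `⟨h⟩` cannot meet both nontrivially: `hᵐ ∈ A` and `hⁿ ∈ B` imply `hᵐⁿ ∈ A ⊓ B`.

A subgroup `H` without non-abelian free subgroups is no harder than a cyclic one, since by
Nielsen–Schreier `H ⊓ F` is free, hence cyclic.
-/

section

open Subgroup

variable {ι α G G' : Type*} [Group G] [Group G']

/-- A free non-abelian group: free, with two elements that do not commute. -/
structure IsNonabelianFree (G : Type*) [Group G] : Prop where
  isFreeGroup : IsFreeGroup G
  exists_mul_ne : ∃ a b : G, a * b ≠ b * a

theorem isNonabelianFree_of_mem [IsFreeGroup G] {K : Subgroup G} {a b : G} (ha : a ∈ K)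
    (hb : b ∈ K) (hab : a * b ≠ b * a) : IsNonabelianFree K :=
  ⟨inferInstance, ⟨a, ha⟩, ⟨b, hb⟩, fun h => hab (congrArg Subtype.val h)⟩

namespace IsNonabelianFree

theorem of_mulEquiv (hG : IsNonabelianFree G) (e : G ≃* G') : IsNonabelianFree G' where
  isFreeGroup :=
    have := hG.isFreeGroup
    IsFreeGroup.ofMulEquiv e
  exists_mul_ne := by
    obtain ⟨a, b, hab⟩ := hG.exists_mul_ne
    exact ⟨e a, e b, by simpa only [← map_mul] using e.injective.ne hab⟩

theorem map {K : Subgroup G} (hK : IsNonabelianFree K) {f : G →* G'}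
    (hf : Function.Injective f) : IsNonabelianFree (K.map f) :=
  hK.of_mulEquiv (K.equivMapOfInjective f hf)

theorem not_isMulCommutative_of_le {K H : Subgroup G} (hK : IsNonabelianFree K) (hKH : K ≤ H) :
    ¬ IsMulCommutative H := by
  intro _
  obtain ⟨a, b, hab⟩ := hK.exists_mul_ne
  exact hab (Subtype.ext (setLike_mul_comm (hKH a.2) (hKH b.2)))

end IsNonabelianFree

theorem freeGroup_of_mul_of_ne {i j : α} (hij : i ≠ j) :
    FreeGroup.of i * FreeGroup.of j ≠ FreeGroup.of j * FreeGroup.of i := by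
  classical
  intro h
  have hword := congrArg FreeGroup.toWord h
  simp [FreeGroup.of, FreeGroup.reduce, hij] at hword

theorem isCyclic_freeGroup_of_subsingleton [Subsingleton α] : IsCyclic (FreeGroup α) := by
  rcases isEmpty_or_nonempty α with _ | ⟨⟨x⟩⟩
  · infer_instance
  · have := uniqueOfSubsingleton x
    infer_instance

theorem isNonabelianFree_freeGroup_iff : IsNonabelianFree (FreeGroup α) ↔ Nontrivial α where
  mp h := by
    by_contra hα
    rw [not_nontrivial_iff_subsingleton] at hα
    have := isCyclic_freeGroup_of_subsingleton (α := α)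
    obtain ⟨a, b, hab⟩ := h.exists_mul_ne
    exact hab (mul_comm' a b)
  mpr _ := by
    obtain ⟨i, j, hij⟩ := exists_pair_ne α
    exact ⟨inferInstance, _, _, freeGroup_of_mul_of_ne hij⟩

theorem isCyclic_of_not_isNonabelianFree [IsFreeGroup G] (hG : ¬ IsNonabelianFree G) :
    IsCyclic G := by
  have e := IsFreeGroup.mulEquiv G
  have : Subsingleton (IsFreeGroup.Generators G) := by
    rw [← not_nontrivial_iff_subsingleton, ← isNonabelianFree_freeGroup_iff]
    exact fun h => hG (h.of_mulEquiv e)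
  exact e.isCyclic.1 isCyclic_freeGroup_of_subsingleton

theorem isMulTorsionFree_of_isFreeGroup [IsFreeGroup G] : IsMulTorsionFree G :=
  (IsFreeGroup.toFreeGroup G).injective.isMulTorsionFree (IsFreeGroup.toFreeGroup G).toMonoidHom

theorem isNonabelianFree_closure_image_of {s : Set α} (hs : s.Nontrivial) :
    IsNonabelianFree (closure (FreeGroup.of '' s)) := by
  obtain ⟨i, hi, j, hj, hij⟩ := hs
  exact isNonabelianFree_of_mem (subset_closure ⟨i, hi, rfl⟩) (subset_closure ⟨j, hj, rfl⟩)
    (freeGroup_of_mul_of_ne hij)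

theorem disjoint_closure_image_of {s t : Set α} (hst : Disjoint s t) :
    Disjoint (closure (FreeGroup.of '' s)) (closure (FreeGroup.of '' t)) := by
  classical
  let retraction : FreeGroup α →* FreeGroup α :=
    FreeGroup.lift fun i => if i ∈ s then FreeGroup.of i else 1
  have fixes_s : closure (FreeGroup.of '' s) ≤ retraction.eqLocus (MonoidHom.id _) := by
    rw [closure_le]
    rintro _ ⟨i, hi, rfl⟩
    change retraction (FreeGroup.of i) = FreeGroup.of i
    simp [retraction, hi]
  have kills_t : closure (FreeGroup.of '' t) ≤ retraction.ker := by
    rw [closure_le]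
    rintro _ ⟨i, hi, rfl⟩
    simp [retraction, MonoidHom.mem_ker, hst.notMem_of_mem_right hi]
  rw [Subgroup.disjoint_def]
  exact fun {x} hxs hxt => (fixes_s hxs : retraction x = x).symm.trans (kills_t hxt)

/-- The action of the permutations of `α` on `FreeGroup α` by relabelling generators, in the form
required to build the semidirect product `FreeGroup α ⋊ Equiv.Perm α`. -/
def permMulAut (α : Type*) : Equiv.Perm α →* MulAut (FreeGroup α) where
  toFun := FreeGroup.freeGroupCongr
  map_one' := FreeGroup.freeGroupCongr_refl
  map_mul' e f := (FreeGroup.freeGroupCongr_trans f e).symm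

theorem injective_lift_conj_zpow (B : FreeGroupBasis ι G) {a b : ι} (hab : a ≠ b) :
    Function.Injective (FreeGroup.lift fun i : ℤ => B a ^ i * B b * (B a ^ i)⁻¹) := by
  classical
  let ψ : G →* FreeGroup ℤ ⋊[permMulAut ℤ] Equiv.Perm ℤ :=
    B.lift fun x => if x = a then SemidirectProduct.inr (Equiv.addRight 1)
      else SemidirectProduct.inl (FreeGroup.of 0)
  have ψ_a : ψ (B a) = SemidirectProduct.inr (Equiv.addRight 1) := by simp [ψ]
  have ψ_b : ψ (B b) = SemidirectProduct.inl (FreeGroup.of 0) := by simp [ψ, hab.symm]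
  have ψ_conj (i : ℤ) :
      ψ (B a ^ i * B b * (B a ^ i)⁻¹) = SemidirectProduct.inl (FreeGroup.of i) := by
    simp only [map_mul, map_inv, map_zpow, ψ_a, ψ_b]
    rw [← map_zpow, ← map_inv, ← SemidirectProduct.inl_aut]
    simp [permMulAut]
  have ψ_comp_lift : ψ.comp (FreeGroup.lift fun i : ℤ => B a ^ i * B b * (B a ^ i)⁻¹) =
      SemidirectProduct.inl := by
    ext1 i
    simpa using ψ_conj i
  refine Function.Injective.of_comp (f := ψ) ?_
  rw [← MonoidHom.coe_comp, ψ_comp_lift]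
  exact SemidirectProduct.inl_injective

theorem disjoint_or_disjoint_of_isCyclic {A B C : Subgroup G} [IsCyclic C] [IsMulTorsionFree C]
    (hAB : Disjoint A B) : Disjoint A C ∨ Disjoint B C := by
  obtain ⟨c, hc⟩ := IsCyclic.exists_generator (α := C)
  simp only [Subgroup.disjoint_def]
  by_contra! ⟨⟨x, hxA, hxC, hx⟩, ⟨y, hyB, hyC, hy⟩⟩
  obtain ⟨m, hm⟩ := hc ⟨x, hxC⟩
  obtain ⟨n, hn⟩ := hc ⟨y, hyC⟩
  obtain rfl : (c : G) ^ m = x := congrArg Subtype.val hm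
  obtain rfl : (c : G) ^ n = y := congrArg Subtype.val hn
  have zpow_mul_eq_one : (c : G) ^ (m * n) = 1 :=
    Subgroup.disjoint_def.1 hAB (zpow_mul (c : G) m n ▸ A.zpow_mem hxA n)
      (zpow_mul' (c : G) m n ▸ B.zpow_mem hyB m)
  have : c = 1 ∨ m * n = 0 := IsMulTorsionFree.zpow_eq_one_iff.1 (mod_cast zpow_mul_eq_one)
  rcases this with rfl | hmn
  · simp at hx
  · rcases mul_eq_zero.1 hmn with rfl | rfl
    · simp at hx
    · simp at hy

namespace IsNonabelianFree

theorem exists_disjoint_pair (hG : IsNonabelianFree G) :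
    ∃ A B : Subgroup G, IsNonabelianFree A ∧ IsNonabelianFree B ∧ Disjoint A B := by
  have := hG.isFreeGroup
  have : Nontrivial (IsFreeGroup.Generators G) :=
    isNonabelianFree_freeGroup_iff.1 (hG.of_mulEquiv (IsFreeGroup.toFreeGroup G))
  obtain ⟨a, b, hab⟩ := exists_pair_ne (IsFreeGroup.Generators G)
  have hinj := injective_lift_conj_zpow (IsFreeGroup.basis G) hab
  have h01 : ({0, 1} : Set ℤ).Nontrivial := Set.nontrivial_pair (by norm_num)
  have h23 : ({2, 3} : Set ℤ).Nontrivial := Set.nontrivial_pair (by norm_num)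
  have hdisj : Disjoint ({0, 1} : Set ℤ) {2, 3} := by simp
  exact ⟨_, _, (isNonabelianFree_closure_image_of h01).map hinj,
    (isNonabelianFree_closure_image_of h23).map hinj,
    disjoint_map hinj (disjoint_closure_image_of hdisj)⟩

theorem exists_disjoint_of_isCyclic (hG : IsNonabelianFree G) (C : Subgroup G) [IsCyclic C] :
    ∃ A : Subgroup G, IsNonabelianFree A ∧ Disjoint A C := by
  have := hG.isFreeGroup
  have := isMulTorsionFree_of_isFreeGroup (G := G)
  obtain ⟨A, B, hA, hB, hAB⟩ := hG.exists_disjoint_pair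
  rcases disjoint_or_disjoint_of_isCyclic (C := C) hAB with hAC | hBC
  exacts [⟨A, hA, hAC⟩, ⟨B, hB, hBC⟩]

end IsNonabelianFree

theorem stmt_1_general {K H : Subgroup G} (hK : IsNonabelianFree K)
    (hH : ∀ L ≤ H, ¬ IsNonabelianFree L) :
    ∃ L ≤ K, IsNonabelianFree L ∧ Disjoint L H := by
  have := hK.isFreeGroup
  have : IsCyclic (H.subgroupOf K) := isCyclic_of_not_isNonabelianFree fun h =>
    hH _ (map_le_iff_le_comap.2 le_rfl) (h.map K.subtype_injective)
  obtain ⟨L, hL, hLH⟩ := hK.exists_disjoint_of_isCyclic (H.subgroupOf K)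
  refine ⟨L.map K.subtype, map_subtype_le L, hL.map K.subtype_injective, ?_⟩
  rw [Subgroup.disjoint_def]
  rintro _ ⟨x, hxL, rfl⟩ hxH
  simpa using Subgroup.disjoint_def.1 hLH hxL hxH

end

/-- Let `F` be a free non-abelian group and `H ≤ F` a cyclic subgroup.
Then there exists a free non-abelian subgroup `F̃ ≤ F` such that `F̃ ∩ H` is trivial. -/
theorem stmt_1 (F : Type*) [Group F] [IsFreeGroup F]
    (hF : ∃ a b : F, a * b ≠ b * a)
    (H : Subgroup F) (hH : IsCyclic H) :
    ∃ Ft : Subgroup F, IsFreeGroup Ft ∧ (∃ a b : Ft, a * b ≠ b * a) ∧ Ft ⊓ H = ⊥ := by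
  obtain ⟨a, b, hab⟩ := hF
  obtain ⟨Ft, -, ⟨hfree, hne⟩, hdisj⟩ := stmt_1_general
    (isNonabelianFree_of_mem (Subgroup.mem_top a) (Subgroup.mem_top b) hab)
    fun L hLH hL => hL.not_isMulCommutative_of_le hLH hH.isMulCommutative
  exact ⟨Ft, hfree, hne, hdisj.eq_bot⟩
end

section
/- Let F be a free non-abelian group and let φ : F → G₁ × G₂ × ⋯ × Gₙ be a homomorphism into a finite direct product of groups. If for every i ∈ {1,…,n} the composition φᵢ of φ with the projection onto Gᵢ has a non-trivial kernel, then φ has a non-trivial kernel. -/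
/-!
Two disjoint normal subgroups commute elementwise. In a free group, by the Nielsen–Schreier theorem,
two commuting elements generate a subgroup that is free and abelian, hence cyclic; so nontrivial
commuting elements have a common nontrivial power, and nontrivial normal subgroups are never
disjoint. By induction a finite family of them has nontrivial intersection, and `φ.ker` is the
intersection of the kernels of the components of `φ`.
-/

section Group

open Subgroup

variable {G : Type*} [Group G]

theorem zpowers_inf_zpowers_ne_bot_of_mem_zpowers [IsMulTorsionFree G] {a b c : G}
    (hac : a ∈ zpowers c) (hbc : b ∈ zpowers c) (ha : a ≠ 1) (hb : b ≠ 1) :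
    zpowers a ⊓ zpowers b ≠ ⊥ := by
  obtain ⟨k, rfl⟩ := mem_zpowers_iff.1 hac
  obtain ⟨l, rfl⟩ := mem_zpowers_iff.1 hbc
  have hl : l ≠ 0 := by rintro rfl; exact hb (zpow_zero c)
  have hne : (c ^ k) ^ l ≠ 1 := mt (IsMulTorsionFree.zpow_eq_one_iff_left hl).1 ha
  have hmem : (c ^ k) ^ l ∈ zpowers (c ^ k) ⊓ zpowers (c ^ l) :=
    ⟨zpow_mem_zpowers _ _, zpow_comm c k l ▸ zpow_mem_zpowers _ _⟩
  exact fun hbot ↦ hne (mem_bot.1 (hbot ▸ hmem))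

theorem inf_ne_bot_of_normal
    (hG : ∀ a b : G, a ≠ 1 → b ≠ 1 → Commute a b → zpowers a ⊓ zpowers b ≠ ⊥)
    {M N : Subgroup G} [hM : M.Normal] [hN : N.Normal] (hM_bot : M ≠ ⊥) (hN_bot : N ≠ ⊥) :
    M ⊓ N ≠ ⊥ := by
  intro hMN
  obtain ⟨a, haM, ha⟩ := M.bot_or_exists_ne_one.resolve_left hM_bot
  obtain ⟨b, hbN, hb⟩ := N.bot_or_exists_ne_one.resolve_left hN_bot
  have hab : Commute a b :=
    commute_of_normal_of_disjoint M N hM hN (disjoint_iff.2 hMN) a b haM hbN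
  have hle : zpowers a ⊓ zpowers b ≤ M ⊓ N :=
    inf_le_inf (zpowers_le.2 haM) (zpowers_le.2 hbN)
  exact hG a b ha hb hab (le_bot_iff.1 (hle.trans_eq hMN))

theorem iInf_ne_bot_of_normal [Nontrivial G]
    (hG : ∀ a b : G, a ≠ 1 → b ≠ 1 → Commute a b → zpowers a ⊓ zpowers b ≠ ⊥)
    {ι : Type*} [Finite ι] {N : ι → Subgroup G} (hN : ∀ i, (N i).Normal) (hN_bot : ∀ i, N i ≠ ⊥) :
    ⨅ i, N i ≠ ⊥ := by
  cases nonempty_fintype ι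
  rw [← Finset.inf_univ_eq_iInf]
  refine (Finset.inf_induction (p := fun K : Subgroup G ↦ K.Normal ∧ K ≠ ⊥)
    ⟨inferInstance, top_ne_bot⟩ ?_ fun i _ ↦ ⟨hN i, hN_bot i⟩).2
  rintro K ⟨_, hK⟩ L ⟨_, hL⟩
  exact ⟨inferInstance, inf_ne_bot_of_normal hG hK hL⟩

theorem ker_eq_iInf_ker_evalMonoidHom_comp {ι : Type*} {H : ι → Type*} [∀ i, MulOneClass (H i)]
    (φ : G →* ∀ i, H i) : φ.ker = ⨅ i, ((Pi.evalMonoidHom H i).comp φ).ker := by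
  ext a
  simp [mem_iInf, MonoidHom.mem_ker, funext_iff]

end Group

section FreeGroup

open Subgroup

theorem commute_freeGroup_of_iff {α : Type*} {x y : α} :
    Commute (FreeGroup.of x) (FreeGroup.of y) ↔ x = y := by
  classical
  refine ⟨fun h ↦ ?_, fun h ↦ h ▸ Commute.refl _⟩
  by_contra hxy
  have := congrArg FreeGroup.toWord h.eq
  simp [FreeGroup.toWord_mul, hxy] at this

variable {F : Type*} [Group F] [IsFreeGroup F]

theorem isMulTorsionFree_of_isFreeGroup_s2 : IsMulTorsionFree F :=
  (IsFreeGroup.toFreeGroup F).injective.isMulTorsionFree (IsFreeGroup.toFreeGroup F).toMonoidHom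

theorem isCyclic_of_isFreeGroup_of_isMulCommutative [IsMulCommutative F] : IsCyclic F := by
  let e := IsFreeGroup.toFreeGroup F
  have : Subsingleton (IsFreeGroup.Generators F) :=
    ⟨fun x y ↦ commute_freeGroup_of_iff.1 <| e.symm.injective <| by
      simpa only [map_mul] using mul_comm' (e.symm (.of x)) (e.symm (.of y))⟩
  have : IsCyclic (FreeGroup (IsFreeGroup.Generators F)) := by
    cases isEmpty_or_nonempty (IsFreeGroup.Generators F)
    · infer_instance
    · have := uniqueOfSubsingleton (Classical.arbitrary (IsFreeGroup.Generators F))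
      infer_instance
  exact isCyclic_of_surjective e.symm e.symm.surjective

theorem zpowers_inf_zpowers_ne_bot_of_commute {a b : F} (ha : a ≠ 1) (hb : b ≠ 1)
    (hab : Commute a b) : zpowers a ⊓ zpowers b ≠ ⊥ := by
  have := isMulTorsionFree_of_isFreeGroup_s2 (F := F)
  have : IsMulCommutative (closure {a, b}) := isMulCommutative_closure (by simp [hab.eq])
  obtain ⟨c, hc⟩ := (closure {a, b}).isCyclic_iff_exists_zpowers_eq_top.1
    isCyclic_of_isFreeGroup_of_isMulCommutative
  have hac : a ∈ zpowers c := hc ▸ subset_closure (by simp)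
  have hbc : b ∈ zpowers c := hc ▸ subset_closure (by simp)
  exact zpowers_inf_zpowers_ne_bot_of_mem_zpowers hac hbc ha hb

end FreeGroup

theorem stmt_2_general {F : Type*} [Group F] [IsFreeGroup F] [Nontrivial F]
    {ι : Type*} [Finite ι] {G : ι → Type*} [∀ i, MulOneClass (G i)] (φ : F →* ∀ i, G i)
    (h : ∀ i, ((Pi.evalMonoidHom G i).comp φ).ker ≠ ⊥) :
    φ.ker ≠ ⊥ := by
  rw [ker_eq_iInf_ker_evalMonoidHom_comp]
  exact iInf_ne_bot_of_normal (fun _ _ ↦ zpowers_inf_zpowers_ne_bot_of_commute)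
    (fun _ ↦ MonoidHom.normal_ker _) h

/-- Let `F` be a free non-abelian group and
`φ : F → G₁ × ⋯ × Gₙ` a homomorphism into a finite direct product of groups.
If every composition with a projection has non-trivial kernel, then `φ` has
non-trivial kernel. -/
theorem stmt_2 (F : Type*) [Group F] [IsFreeGroup F]
    (hF : ∃ a b : F, a * b ≠ b * a)
    (n : ℕ) (G : Fin n → Type*) [∀ i, Group (G i)]
    (φ : F →* ∀ i, G i)
    (h : ∀ i, ((Pi.evalMonoidHom G i).comp φ).ker ≠ ⊥) :
    φ.ker ≠ ⊥ := by
  have : Nontrivial F := let ⟨_, _, hab⟩ := hF; ⟨_, _, hab⟩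
  exact stmt_2_general φ h
end

section
/- Let 𝖷 = (X_1, X_2, …) be a sequence of nonempty finite sets, let T be a spherically homogeneous rooted subtree of 𝖷^* and let g be an automorphism of the rooted tree 𝖷^*. Then lim_{n→∞} θ_{g,T}(n)/|L_n| = m_T(Σ_g ∩ ∂T), where L_n is the n-th level of T and Σ_g is the set of g-singular points of 𝖷^ω. -/
/-! Trees of words over a sequence `𝖷 = (X 0, X 1, …)` of alphabets, realized via
their boundary `𝖷^ω = X 0 × X 1 × ⋯`. -/

/-- Finite words of length `m` over the sequence of alphabets `X` (the `m`-th level `𝖷^m`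
of the tree of words `𝖷^*`). -/
abbrev FWord (X : ℕ → Type*) (m : ℕ) := (i : Fin m) → X i

/-- The boundary `𝖷^ω` of the tree of words `𝖷^*`. -/
abbrev FBoundary (X : ℕ → Type*) := (i : ℕ) → X i

/-- The sequence `w ∈ 𝖷^ω` extends the finite word `v` (`v` is a beginning of `w`). -/
def FExtends {X : ℕ → Type*} {m : ℕ} (w : FBoundary X) (v : FWord X m) : Prop :=
  ∀ i : Fin m, w i = v i

/-- The beginning of length `m` of a sequence `w ∈ 𝖷^ω`. -/
def wprefix {X : ℕ → Type*} (w : FBoundary X) (m : ℕ) : FWord X m := fun i => w i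

/-- A permutation of the boundary `𝖷^ω` is (induced by) an automorphism of the rooted tree
`𝖷^*` if and only if for all `n` it preserves the relation "agree on the first `n` letters"
(two sequences have the same length-`n` beginning iff their images do). -/
def IsTreeAut {X : ℕ → Type*} (f : Equiv.Perm (FBoundary X)) : Prop :=
  ∀ (n : ℕ) (w w' : FBoundary X),
    (∀ i, i < n → w i = w' i) ↔ (∀ i, i < n → f w i = f w' i)

/-- The automorphism group of the rooted tree `𝖷^*`, realized as the group of those
permutations of the boundary `𝖷^ω` induced by tree automorphisms. -/
def treeAut (X : ℕ → Type*) : Subgroup (Equiv.Perm (FBoundary X)) where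
  carrier := {f | IsTreeAut f}
  one_mem' := by intro n w w'; simp
  mul_mem' := by
    intro f g hf hg n w w'
    have h := (hg n w w').trans (hf n (g w) (g w'))
    simpa using h
  inv_mem' := by
    intro f hf n w w'
    have h := (hf n (f⁻¹ w) (f⁻¹ w')).symm
    simpa using h

/-- The restriction `f|_v` of `f` to the subtree at the vertex `v` is trivial:
`f` maps `v·u` to `(f v)·u` for every `u`. -/
def RestrictTrivial {X : ℕ → Type*} (f : Equiv.Perm (FBoundary X)) {m : ℕ}
    (v : FWord X m) : Prop :=
  ∀ w : FBoundary X, FExtends w v → ∀ i, m ≤ i → f w i = w i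

/-- The set `Σ_f` of `f`-singular points of `𝖷^ω`: the points `w` such that `f|_v ≠ id`
for every beginning `v` of `w`. -/
def singularSet {X : ℕ → Type*} (f : Equiv.Perm (FBoundary X)) : Set (FBoundary X) :=
  {w | ∀ m : ℕ, ¬ RestrictTrivial f (wprefix w m)}

/-- The parent of a vertex of `𝖷^*` (drop the last letter). -/
def wparent {X : ℕ → Type*} {n : ℕ} (v : FWord X (n + 1)) : FWord X n :=
  fun i => v ⟨i, Nat.lt_succ_of_lt i.2⟩

/-- Append one letter to a finite word. -/
def wsnoc {X : ℕ → Type*} {n : ℕ} (v : FWord X n) (x : X n) : FWord X (n + 1) :=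
  fun i => if h : (i : ℕ) < n then v ⟨i, h⟩
    else cast (congrArg X (Nat.le_antisymm (Nat.not_lt.mp h) (Nat.lt_succ_iff.mp i.2))) x

/-- The relative growth function `θ_{f,T}(n)`: the number of vertices `v` of the `n`-th
level of the rooted subtree `T` with `f|_v ≠ id`. -/
noncomputable def thetaRel {X : ℕ → Type*} (f : Equiv.Perm (FBoundary X))
    (T : ∀ n, Set (FWord X n)) (n : ℕ) : ℕ :=
  {v ∈ T n | ¬ RestrictTrivial f v}.ncard

/-- The boundary `∂T` of a rooted subtree `T ⊆ 𝖷^*` (given by its level sets). -/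
def boundaryOf {X : ℕ → Type*} (T : ∀ n, Set (FWord X n)) : Set (FBoundary X) :=
  {w | ∀ n, wprefix w n ∈ T n}

/-- Extend a finite word to a boundary point by an arbitrary fixed tail. -/
noncomputable def wext {X : ℕ → Type*} [∀ i, Nonempty (X i)] {m : ℕ} (v : FWord X m) :
    FBoundary X :=
  fun i => if h : i < m then v ⟨i, h⟩ else Classical.arbitrary (X i)

/-- The image of the vertex `v` of `𝖷^*` under (the tree automorphism inducing) `f`. -/
noncomputable def wImage {X : ℕ → Type*} [∀ i, Nonempty (X i)]
    (f : Equiv.Perm (FBoundary X)) {m : ℕ} (v : FWord X m) : FWord X m :=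
  fun i => f (wext v) i

/-!
The vertices `v` of `T` with `g|_v ≠ id` form a subtree `S` of `T`, since `g|_v = id` passes to
the descendants of `v`, and `∂S = Σ_g ∩ ∂T`. The boundary `∂S` is the decreasing intersection of
the clopen sets of points passing through the levels `S n`, whose measures are `|S n| / |T n|`.
-/

section Subtrees

open Filter MeasureTheory

variable {X : ℕ → Type*} {n : ℕ}

/-- The level sets `S n ⊆ 𝖷^n` form a rooted subtree of `𝖷^*`, which may be empty: they contain
the parent of each of their vertices. -/
def IsParentClosed (S : ∀ n, Set (FWord X n)) : Prop :=
  ∀ (n : ℕ) (v : FWord X (n + 1)), v ∈ S (n + 1) → wparent v ∈ S n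

/-- The vertices `v` of the `n`-th level of `T` with `f|_v ≠ id`, counted by `thetaRel f T n`. -/
def singularVertices (f : Equiv.Perm (FBoundary X)) (T : ∀ n, Set (FWord X n)) (n : ℕ) :
    Set (FWord X n) :=
  {v ∈ T n | ¬ RestrictTrivial f v}

theorem RestrictTrivial.of_wparent {f : Equiv.Perm (FBoundary X)} {v : FWord X (n + 1)}
    (h : RestrictTrivial f (wparent v)) : RestrictTrivial f v :=
  fun w hw i hi => h w (fun j => hw j.castSucc) i (Nat.le_of_succ_le hi)

theorem IsParentClosed.singularVertices {T : ∀ n, Set (FWord X n)} (hT : IsParentClosed T)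
    (f : Equiv.Perm (FBoundary X)) : IsParentClosed (singularVertices f T) :=
  fun n v hv => ⟨hT n v hv.1, fun h => hv.2 h.of_wparent⟩

theorem boundaryOf_singularVertices (f : Equiv.Perm (FBoundary X)) (T : ∀ n, Set (FWord X n)) :
    boundaryOf (singularVertices f T) = singularSet f ∩ boundaryOf T := by
  ext w
  exact forall_and.trans and_comm

theorem boundaryOf_eq_iInter_preimage_wprefix (S : ∀ n, Set (FWord X n)) :
    boundaryOf S = ⋂ n, (wprefix · n) ⁻¹' S n :=
  Set.ofPred_forall _

theorem IsParentClosed.antitone_preimage_wprefix {S : ∀ n, Set (FWord X n)}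
    (hS : IsParentClosed S) : Antitone fun n => (wprefix · n) ⁻¹' S n :=
  antitone_nat_of_succ_le fun n w hw => hS n (wprefix w (n + 1)) hw

theorem setOf_fextends (v : FWord X n) :
    {w : FBoundary X | FExtends w v} = (wprefix · n) ⁻¹' {v} :=
  Set.ext fun _ => funext_iff.symm

variable [∀ i, MeasurableSpace (X i)] {μ : Measure (FBoundary X)}

theorem measurable_wprefix (n : ℕ) : Measurable fun w : FBoundary X => wprefix w n :=
  measurable_pi_lambda _ fun i => measurable_pi_apply (i : ℕ)

theorem IsParentClosed.tendsto_measure_preimage_wprefix [IsFiniteMeasure μ]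
    {S : ∀ n, Set (FWord X n)} (hS : IsParentClosed S) (hmeas : ∀ n, MeasurableSet (S n)) :
    Tendsto (fun n => μ ((wprefix · n) ⁻¹' S n)) atTop (nhds (μ (boundaryOf S))) := by
  rw [boundaryOf_eq_iInter_preimage_wprefix]
  exact tendsto_measure_iInter_atTop
    (fun n => (measurable_wprefix n (hmeas n)).nullMeasurableSet)
    hS.antitone_preimage_wprefix ⟨0, measure_ne_top μ _⟩

variable [∀ i, MeasurableSingletonClass (X i)]

theorem measure_preimage_wprefix_of_const {S : Set (FWord X n)} (hS : S.Finite) {c : ENNReal}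
    (hc : ∀ v ∈ S, μ {w | FExtends w v} = c) :
    μ ((wprefix · n) ⁻¹' S) = S.ncard * c := by
  lift S to Finset (FWord X n) using hS
  calc μ ((wprefix · n) ⁻¹' ↑S)
      = ∑ v ∈ S, μ ((wprefix · n) ⁻¹' {v}) :=
        (sum_measure_preimage_singleton S fun v _ =>
          measurable_wprefix n (measurableSet_singleton v)).symm
    _ = ∑ _v ∈ S, c := Finset.sum_congr rfl fun v hv => by rw [← setOf_fextends, hc v hv]
    _ = (S : Set (FWord X n)).ncard * c := by
        rw [Finset.sum_const, nsmul_eq_mul, Set.ncard_coe_finset]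

theorem IsParentClosed.tendsto_ncard_mul_of_const [IsFiniteMeasure μ]
    {S : ∀ n, Set (FWord X n)} (hS : IsParentClosed S) (hfin : ∀ n, (S n).Finite)
    {c : ℕ → ENNReal} (hc : ∀ n, ∀ v ∈ S n, μ {w | FExtends w v} = c n) :
    Tendsto (fun n => (S n).ncard * c n) atTop (nhds (μ (boundaryOf S))) :=
  (hS.tendsto_measure_preimage_wprefix fun n => (hfin n).measurableSet).congr fun n =>
    measure_preimage_wprefix_of_const (hfin n) (hc n)

theorem stmt_3_general {T : ∀ n, Set (FWord X n)} (hsub : IsParentClosed T)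
    (hfin : ∀ n, (T n).Finite) (g : Equiv.Perm (FBoundary X)) [IsFiniteMeasure μ]
    (hμv : ∀ n, ∀ v ∈ T n, μ {w | FExtends w v} = 1 / ((T n).ncard : ENNReal)) :
    Tendsto (fun n => (thetaRel g T n : ℝ) / ((T n).ncard : ℝ)) atTop
      (nhds (μ (singularSet g ∩ boundaryOf T)).toReal) := by
  have hlim : Tendsto (fun n => (thetaRel g T n : ENNReal) * (1 / (T n).ncard)) atTop
      (nhds (μ (boundaryOf (singularVertices g T)))) :=
    (hsub.singularVertices g).tendsto_ncard_mul_of_const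
      (fun n => (hfin n).subset (Set.sep_subset _ _)) fun n v hv => hμv n v hv.1
  rw [boundaryOf_singularVertices] at hlim
  refine ((ENNReal.tendsto_toReal (measure_ne_top μ _)).comp hlim).congr fun n => ?_
  simp [div_eq_mul_inv]

end Subtrees

open Filter MeasureTheory in
/-- **Proposition `pr:measureregular`.** Let `𝖷 = (X 0, X 1, …)` be a sequence of
nonempty finite sets, `T` a spherically homogeneous rooted subtree of `𝖷^*` and `g` an
automorphism of `𝖷^*`. Then `θ_{g,T}(n)/|L_n| → m_T(Σ_g ∩ ∂T)`, where `L_n` is the `n`-th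
level of `T`, `Σ_g` is the set of `g`-singular points and `m_T` is the probability measure
on `∂T` with `m_T(∂T_v) = 1/|L_n|` for every `v ∈ L_n`. -/
theorem stmt_3 (X : ℕ → Type*) [∀ i, Fintype (X i)] [∀ i, Nonempty (X i)]
    [∀ i, MeasurableSpace (X i)] [∀ i, DiscreteMeasurableSpace (X i)]
    -- `T` is a rooted subtree of `𝖷^*`, given by its level sets `T n ⊆ 𝖷^n`:
    (T : ∀ n, Set (FWord X n))
    (hroot : (fun i => i.elim0) ∈ T 0)
    (hsub : ∀ (n : ℕ) (v : FWord X (n + 1)), v ∈ T (n + 1) → wparent v ∈ T n)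
    -- `T` is spherically homogeneous: the number of children depends only on the level
    (hsph : ∃ d : ℕ → ℕ, ∀ n, ∀ v ∈ T n, {x : X n | wsnoc v x ∈ T (n + 1)}.ncard = d n)
    -- `g` is an automorphism of the tree `𝖷^*`
    (g : Equiv.Perm (FBoundary X)) (hg : IsTreeAut g)
    -- `μ` is the measure `m_T`: the probability measure concentrated on `∂T` with
    -- `μ(∂T_v) = 1/|L_n|` for every vertex `v` of the `n`-th level `L_n = T n` of `T`
    (μ : Measure (FBoundary X)) (hprob : IsProbabilityMeasure μ)
    (hμT : μ (boundaryOf T) = 1)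
    (hμv : ∀ n, ∀ v ∈ T n, μ {w | FExtends w v} = 1 / ((T n).ncard : ENNReal)) :
    Tendsto (fun n => (thetaRel g T n : ℝ) / ((T n).ncard : ℝ)) atTop
      (nhds (μ (singularSet g ∩ boundaryOf T)).toReal) :=
  stmt_3_general hsub (fun n => (T n).toFinite) g hμv
end

section
/- Let 𝖷 = (X_1, X_2, …) be a sequence of nonempty finite sets, let G be a finitely generated group of automorphisms of 𝖷^*, and let T ⊆ 𝖷^* be a G-invariant rooted subtree on which G acts level transitively. If every element of G is almost finitary on T, then every connected component of the Schreier graph of the action of G on ∂T is amenable. -/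
/-!
The set of edges of the level `T n` along which a generator has trivial restriction cuts `T n` into
classes whose members differ by elements of `G` that do not touch the tail. Almost finitarity says
that, for large `n`, few edges of the level have nontrivial restriction, so by averaging some class
has few edges leaving it. Level transitivity moves `w` to a point with beginning in that class, and
attaching the tail of this point to all words of the class gives a Følner set in the orbit of `w`.
-/

/-- The edges of the Schreier graph of an action, with respect to a set `S` of acting elements, that
begin in `F` and end outside `F`; the edge from `x` to `s • x` is the pair `(s, x)`. -/
def outgoingEdges {M α : Type*} [SMul M α] (S : Finset M) (F : Set α) : Set (M × α) :=
  {p | p.1 ∈ S ∧ p.2 ∈ F ∧ p.1 • p.2 ∉ F}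

lemma ncard_outgoingEdges_image_le {M α β : Type*} [SMul M α] (S : Finset M) (C : Finset β)
    (φ : β → α) {R : M → β → Prop} [∀ c, DecidablePred (R · c)]
    (h : ∀ s ∈ S, ∀ c ∈ C, s • φ c ∉ φ '' C → R s c) :
    (outgoingEdges S (φ '' C)).ncard ≤ ∑ c ∈ C, (S.filter (R · c)).card := by
  classical
  let E := C.sigma fun c => S.filter (R · c)
  have hsub : outgoingEdges S (φ '' C) ⊆ E.image fun p => (p.2, φ p.1) := by
    rintro ⟨s, _⟩ ⟨hs, ⟨c, hc, rfl⟩, hout⟩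
    have hsc : (⟨c, s⟩ : Σ _ : β, M) ∈ E :=
      Finset.mem_sigma.2 ⟨hc, Finset.mem_filter.2 ⟨hs, h s hs c hc hout⟩⟩
    exact Finset.mem_coe.2 (Finset.mem_image_of_mem _ hsc)
  calc (outgoingEdges S (φ '' C)).ncard
      ≤ (E.image fun p => (p.2, φ p.1)).card := by
        simpa only [Set.ncard_coe_finset] using Set.ncard_le_ncard hsub (Finset.finite_toSet _)
    _ ≤ E.card := Finset.card_image_le
    _ = ∑ c ∈ C, (S.filter (R · c)).card := Finset.card_sigma _ _

open scoped Classical in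
lemma exists_class_sum_lt_sum {α M : Type*} [AddCommMonoid M] [LinearOrder M]
    [IsOrderedAddMonoid M] (r : Setoid α) {L : Finset α} {a b : α → M}
    (h : ∑ x ∈ L, a x < ∑ x ∈ L, b x) :
    ∃ v ∈ L, ∑ x ∈ L with r x v, a x < ∑ x ∈ L with r x v, b x := by
  have hmaps : ∀ x ∈ L, Quotient.mk r x ∈ L.image (Quotient.mk r) :=
    fun x hx => Finset.mem_image_of_mem _ hx
  rw [← Finset.sum_fiberwise_of_maps_to hmaps, ← Finset.sum_fiberwise_of_maps_to hmaps] at h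
  obtain ⟨q, hq, hlt⟩ := Finset.exists_lt_of_sum_lt h
  obtain ⟨v, hv, rfl⟩ := Finset.mem_image.1 hq
  exact ⟨v, hv, by simpa only [Quotient.eq] using hlt⟩

section Words

variable {X : ℕ → Type*} {n : ℕ}

/-- The concatenation of the finite word `v` of length `n` with the tail of `u` after its first `n`
letters. Taking the tail from a full sequence `u` avoids shifting the alphabets. -/
def wappend (v : FWord X n) (u : FBoundary X) : FBoundary X :=
  fun i => if h : i < n then v ⟨i, h⟩ else u i

lemma eq_wappend_iff {x u : FBoundary X} {v : FWord X n} :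
    x = wappend v u ↔ wprefix x n = v ∧ ∀ i, n ≤ i → x i = u i := by
  constructor
  · rintro rfl
    exact ⟨funext fun i => dif_pos i.2, fun i hi => dif_neg hi.not_gt⟩
  · rintro ⟨rfl, htail⟩
    funext i
    by_cases hi : i < n
    · simp [wappend, wprefix, hi]
    · simp [wappend, hi, htail i (not_lt.1 hi)]

lemma wprefix_wappend (v : FWord X n) (u : FBoundary X) : wprefix (wappend v u) n = v :=
  (eq_wappend_iff.1 rfl).1

lemma wappend_apply_of_le (v : FWord X n) (u : FBoundary X) {i : ℕ} (hi : n ≤ i) :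
    wappend v u i = u i :=
  (eq_wappend_iff.1 rfl).2 i hi

lemma wappend_wprefix (u : FBoundary X) : wappend (wprefix u n) u = u :=
  (eq_wappend_iff.2 ⟨rfl, fun _ _ => rfl⟩).symm

lemma wappend_left_injective (u : FBoundary X) :
    Function.Injective fun v : FWord X n => wappend v u :=
  Function.LeftInverse.injective (g := (wprefix · n)) fun v => wprefix_wappend v u

/-- Two words of length `n` are equivalent if some element of `G` moves one to the other while
fixing all tails; this is the orbit relation of `G` on the maps `wappend v`. Attaching one
tail to all words of a class therefore gives points of a single `G`-orbit. -/
def tailSetoid (G : Subgroup (Equiv.Perm (FBoundary X))) (n : ℕ) : Setoid (FWord X n) :=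
  (MulAction.orbitRel G (FBoundary X → FBoundary X)).comap wappend

lemma tailSetoid_iff {G : Subgroup (Equiv.Perm (FBoundary X))} {v v' : FWord X n} :
    tailSetoid G n v v' ↔ ∃ g : G, ∀ u, g • wappend v' u = wappend v u :=
  exists_congr fun _ => funext_iff

variable [∀ i, Nonempty (X i)]

lemma IsTreeAut.wprefix_apply {f : Equiv.Perm (FBoundary X)} (hf : IsTreeAut f)
    (w : FBoundary X) : wprefix (f w) n = wImage f (wprefix w n) := by
  have hagree : ∀ i, i < n → w i = wext (wprefix w n) i := by
    intro i hi
    simp [wext, wprefix, hi]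
  exact funext fun i => (hf n _ _).1 hagree i i.2

lemma RestrictTrivial.apply_wappend {f : Equiv.Perm (FBoundary X)} {v : FWord X n}
    (h : RestrictTrivial f v) (hf : IsTreeAut f) (u : FBoundary X) :
    f (wappend v u) = wappend (wImage f v) u := by
  refine eq_wappend_iff.2 ⟨by rw [hf.wprefix_apply, wprefix_wappend], fun i hi => ?_⟩
  rw [h _ (congrFun (wprefix_wappend v u)) i hi, wappend_apply_of_le v u hi]

lemma RestrictTrivial.tailSetoid_wImage {G : Subgroup (Equiv.Perm (FBoundary X))}
    {f : Equiv.Perm (FBoundary X)} {v : FWord X n} (h : RestrictTrivial f v) (hf : IsTreeAut f)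
    (hfG : f ∈ G) : tailSetoid G n (wImage f v) v :=
  tailSetoid_iff.2 ⟨⟨f, hfG⟩, h.apply_wappend hf⟩

open scoped Classical in
lemma ncard_outgoingEdges_wappend_le {S : Finset (Equiv.Perm (FBoundary X))}
    {C : Finset (FWord X n)} (hS : ∀ s ∈ S, IsTreeAut s)
    (hC : ∀ s ∈ S, ∀ c ∈ C, RestrictTrivial s c → wImage s c ∈ C) (u : FBoundary X) :
    (outgoingEdges S ((wappend · u) '' (C : Set (FWord X n)))).ncard ≤
      ∑ c ∈ C, (S.filter (¬ RestrictTrivial · c)).card := by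
  refine ncard_outgoingEdges_image_le S C (wappend · u) ?_
  intro s hs c hc hout htriv
  exact hout ⟨wImage s c, hC s hs c hc htriv, (htriv.apply_wappend (hS s hs) u).symm⟩

end Words

section Levels

variable {X : ℕ → Type*} {S : Finset (Equiv.Perm (FBoundary X))} {T : ∀ n, Set (FWord X n)}

open scoped Classical in
lemma sum_thetaRel_eq_sum_card {n : ℕ} (hT : (T n).Finite) :
    ∑ s ∈ S, thetaRel s T n =
      ∑ v ∈ hT.toFinset, (S.filter (¬ RestrictTrivial · v)).card := by
  have htheta (s : Equiv.Perm (FBoundary X)) :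
      thetaRel s T n = (hT.toFinset.filter (¬ RestrictTrivial s ·)).card := by
    rw [thetaRel, ← Set.ncard_coe_finset, Finset.coe_filter]
    simp only [hT.mem_toFinset]
  simp only [htheta]
  exact Finset.sum_card_bipartiteAbove_eq_sum_card_bipartiteBelow
    fun s v => ¬ RestrictTrivial s v

lemma exists_level_sum_thetaRel_lt (hT : ∀ n, (T n).Finite) (hTne : ∀ n, (T n).Nonempty)
    (haf : ∀ s ∈ S, Filter.Tendsto (fun n => (thetaRel s T n : ℝ) / ((T n).ncard : ℝ))
      Filter.atTop (nhds 0)) {ε : ℝ} (hε : 0 < ε) :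
    ∃ n, ((∑ s ∈ S, thetaRel s T n : ℕ) : ℝ) < ε * (T n).ncard := by
  have hlim := tendsto_finsetSum S haf
  rw [Finset.sum_const_zero] at hlim
  obtain ⟨n, hn⟩ := (hlim.eventually_lt_const hε).exists
  have hpos : (0 : ℝ) < (T n).ncard := Nat.cast_pos.2 ((Set.ncard_pos (hT n)).2 (hTne n))
  refine ⟨n, ?_⟩
  rwa [← Finset.sum_div, div_lt_iff₀ hpos, ← Nat.cast_sum] at hn

variable [∀ i, Nonempty (X i)] {G : Subgroup (Equiv.Perm (FBoundary X))}

lemma image_wappend_tailClass_subset_orbit {n : ℕ} {C : Set (FWord X n)}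
    {g : Equiv.Perm (FBoundary X)} (hg : IsTreeAut g) (hgG : g ∈ G) (w : FBoundary X)
    (hC : ∀ c ∈ C, tailSetoid G n c (wImage g (wprefix w n))) :
    (wappend · (g w)) '' C ⊆ MulAction.orbit G w := by
  rintro _ ⟨c, hc, rfl⟩
  obtain ⟨k, hk⟩ := tailSetoid_iff.1 (hC c hc)
  have hkg : k • g w = wappend c (g w) := by
    rw [← hk, ← hg.wprefix_apply, wappend_wprefix]
  exact ⟨k * ⟨g, hgG⟩, hkg⟩

lemma exists_folner_of_sum_thetaRel_lt (hG : G ≤ treeAut X) (hSG : ∀ s ∈ S, s ∈ G) {n : ℕ}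
    (hT : (T n).Finite) (hinv : ∀ s ∈ S, ∀ v ∈ T n, wImage s v ∈ T n) {w : FBoundary X}
    (htrans : ∀ v ∈ T n, ∃ g ∈ G, wImage g (wprefix w n) = v) {ε : ℝ}
    (hlt : ((∑ s ∈ S, thetaRel s T n : ℕ) : ℝ) < ε * (T n).ncard) :
    ∃ F : Set (FBoundary X), F.Finite ∧ F.Nonempty ∧ F ⊆ MulAction.orbit G w ∧
      ((outgoingEdges S F).ncard : ℝ) < ε * F.ncard := by
  classical
  rw [sum_thetaRel_eq_sum_card hT, Set.ncard_eq_toFinset_card _ hT, Nat.cast_sum, mul_comm,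
    ← nsmul_eq_mul, ← Finset.sum_const] at hlt
  obtain ⟨v, hv, hclass⟩ := exists_class_sum_lt_sum (tailSetoid G n) hlt
  set C := hT.toFinset.filter (tailSetoid G n · v) with hC
  obtain ⟨g, hg, rfl⟩ := htrans v (hT.mem_toFinset.1 hv)
  have hCclass : ∀ c ∈ C, tailSetoid G n c (wImage g (wprefix w n)) :=
    fun c hc => (Finset.mem_filter.1 hc).2
  have hstep : ∀ s ∈ S, ∀ c ∈ C, RestrictTrivial s c → wImage s c ∈ C := by
    intro s hs c hc htriv
    rw [hC, Finset.mem_filter, hT.mem_toFinset] at hc ⊢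
    exact ⟨hinv s hs c hc.1,
      (tailSetoid G n).trans (htriv.tailSetoid_wImage (hG (hSG s hs)) (hSG s hs)) hc.2⟩
  let F : Set (FBoundary X) := (wappend · (g w)) '' (C : Set (FWord X n))
  refine ⟨F, C.finite_toSet.image _,
    ⟨_, _, Finset.mem_filter.2 ⟨hv, (tailSetoid G n).refl _⟩, rfl⟩,
    image_wappend_tailClass_subset_orbit (hG hg) hg w hCclass, ?_⟩
  calc ((outgoingEdges S F).ncard : ℝ)
      ≤ ∑ c ∈ C, ((S.filter (¬ RestrictTrivial · c)).card : ℝ) := by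
        rw [← Nat.cast_sum, Nat.cast_le]
        exact ncard_outgoingEdges_wappend_le (fun s hs => hG (hSG s hs)) hstep (g w)
    _ < ∑ _c ∈ C, ε := hclass
    _ = ε * F.ncard := by
        rw [Finset.sum_const, nsmul_eq_mul, mul_comm,
          Set.ncard_image_of_injective _ (wappend_left_injective _), Set.ncard_coe_finset]

theorem stmt_4_general (hG : G ≤ treeAut X) (hSG : ∀ s ∈ S, s ∈ G) (hT : ∀ n, (T n).Finite)
    (hinv : ∀ g ∈ G, ∀ (n : ℕ), ∀ v ∈ T n, wImage g v ∈ T n)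
    (htrans : ∀ (n : ℕ), ∀ v ∈ T n, ∀ u ∈ T n, ∃ g ∈ G, wImage g v = u)
    (haf : ∀ s ∈ S, Filter.Tendsto (fun n => (thetaRel s T n : ℝ) / ((T n).ncard : ℝ))
      Filter.atTop (nhds 0))
    {w : FBoundary X} (hw : w ∈ boundaryOf T) {ε : ℝ} (hε : 0 < ε) :
    ∃ F : Set (FBoundary X), F.Finite ∧ F.Nonempty ∧ F ⊆ MulAction.orbit G w ∧
      ((outgoingEdges S F).ncard : ℝ) < ε * F.ncard := by
  obtain ⟨n, hn⟩ := exists_level_sum_thetaRel_lt hT (fun n => ⟨_, hw n⟩) haf hε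
  exact exists_folner_of_sum_thetaRel_lt hG hSG (hT n) (fun s hs => hinv s (hSG s hs) n)
    (htrans n _ (hw n)) hn

end Levels

open Filter in
/-- **Proposition `pr:griamenable`.** Let `G` be a finitely generated group of
automorphisms of `𝖷^*` (generated by the finite symmetric set `S`) and let `T ⊆ 𝖷^*` be a
`G`-invariant rooted subtree on which `G` acts level transitively. If all elements of `G`
are almost finitary on `T`, then every connected component of the Schreier graph of the
action of `(G, S)` on `∂T` is amenable: for every `w ∈ ∂T` and `ε > 0` there is a finite
nonempty Følner set `Fs` inside the component (= the `G`-orbit) of `w` whose set of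
outgoing edges `(s, x)`, `s ∈ S`, `x ∈ Fs`, `s x ∉ Fs` has fewer than `ε·|Fs|` elements. -/
theorem stmt_4 (X : ℕ → Type*) [∀ i, Fintype (X i)] [∀ i, Nonempty (X i)]
    (G : Subgroup (Equiv.Perm (FBoundary X))) (hG : G ≤ treeAut X)
    (S : Finset (Equiv.Perm (FBoundary X))) (hSG : ∀ s ∈ S, s ∈ G)
    (hSsymm : ∀ s ∈ S, s⁻¹ ∈ S) (hSgen : Subgroup.closure (S : Set (Equiv.Perm (FBoundary X))) = G)
    (T : ∀ n, Set (FWord X n))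
    (hroot : (fun i => i.elim0) ∈ T 0)
    (hsub : ∀ (n : ℕ) (v : FWord X (n + 1)), v ∈ T (n + 1) → wparent v ∈ T n)
    (hinv : ∀ g ∈ G, ∀ (n : ℕ), ∀ v ∈ T n, wImage g v ∈ T n)
    (htrans : ∀ (n : ℕ), ∀ v ∈ T n, ∀ u ∈ T n, ∃ g ∈ G, wImage g v = u)
    -- every element of `G` is almost finitary on `T`
    (haf : ∀ g ∈ G,
      Tendsto (fun n => (thetaRel g T n : ℝ) / ((T n).ncard : ℝ)) atTop (nhds 0))
    (w : FBoundary X) (hw : w ∈ boundaryOf T) (ε : ℝ) (hε : 0 < ε) :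
    ∃ Fs : Set (FBoundary X), Fs.Finite ∧ Fs.Nonempty ∧
      (∀ x ∈ Fs, ∃ g ∈ G, g w = x) ∧
      (({p : Equiv.Perm (FBoundary X) × FBoundary X |
          p.1 ∈ S ∧ p.2 ∈ Fs ∧ p.1 p.2 ∉ Fs}.ncard : ℝ) < ε * Fs.ncard) := by
  obtain ⟨F, hfin, hne, horbit, hlt⟩ := stmt_4_general hG hSG (fun n => (T n).toFinite) hinv htrans
    (fun s hs => haf s (hSG s hs)) hw hε
  exact ⟨F, hfin, hne, fun x hx => let ⟨g, hg⟩ := horbit hx; ⟨g, g.2, hg⟩, hlt⟩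
end

section
/- Let 𝖷 = (X_1, X_2, …) be a sequence of nonempty finite sets with |X_i| ≤ M for all i, let w ∈ 𝖷^ω, and let g be a bounded automorphism of 𝖷^* such that g fixes w and the set of directions of g is contained in {w}. Then g has finite order. -/
/-- The restriction `f|_v` is finitary of depth at most `n`: `f|_{vu} = id` for every word
`u` of length `n` below `v`. -/
def FinitaryBelow {X : ℕ → Type*} (f : Equiv.Perm (FBoundary X)) {m : ℕ}
    (v : FWord X m) (n : ℕ) : Prop :=
  ∀ w : FBoundary X, FExtends w v → ∀ i, m + n ≤ i → f w i = w i

/-- `f` is a bounded automorphism with set of directions `W` and finitary depth at most `n`: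
whenever `v ∈ 𝖷^*` is not a beginning of any sequence in `W`, the restriction `f|_v` is
finitary of depth at most `n`. -/
def IsBoundedWith {X : ℕ → Type*} (f : Equiv.Perm (FBoundary X))
    (W : Set (FBoundary X)) (n : ℕ) : Prop :=
  ∀ (m : ℕ) (v : FWord X m), (∀ w ∈ W, ¬ FExtends w v) → FinitaryBelow f v n

/-- `f` is a bounded automorphism: it has a finite set of directions and a finitary depth. -/
def IsBounded {X : ℕ → Type*} (f : Equiv.Perm (FBoundary X)) : Prop :=
  ∃ (W : Set (FBoundary X)) (n : ℕ), W.Finite ∧ IsBoundedWith f W n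

/-! Let `g` fix the set `W` of directions pointwise. If every beginning of a point `u` is a
beginning of a point of `W`, then `g` fixes `u`. Otherwise let `m` be the first level at which `u`
leaves `W`: then `g` fixes the first `m - 1` letters of `u` because it fixes `W`, and the letters
from level `m + n` on by boundedness. Both reasons persist along the orbit, so `u` lies in a finite
`g`-invariant set of points that differ only in a window of at most `n + 1` letters. Such a set has
at most `M ^ (n + 1)` elements whatever `m` is, so `(M ^ (n + 1))!` is a multiple of all periods. -/

open Function PiNat
open scoped Nat

theorem isPeriodicPt_factorial_of_mapsTo {α : Type*} {f : α → α} {s : Set α} {N : ℕ}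
    (hs : s.Finite) (hN : s.ncard ≤ N) (hmaps : Set.MapsTo f s s) (hinj : Set.InjOn f s) {x : α}
    (hx : x ∈ s) : IsPeriodicPt f N ! x := by
  have := hs.fintype
  have hrestrict : IsPeriodicPt (hmaps.restrict f s s) (Fintype.card s)! ⟨x, hx⟩ :=
    congrFun (injective_iff_iterate_factorial_card_eq_id.1 (hmaps.restrict_inj.2 hinj)) ⟨x, hx⟩
  have hcard : IsPeriodicPt f (Fintype.card s)! x := by
    rw [IsPeriodicPt, IsFixedPt, hmaps.iterate_restrict] at hrestrict
    exact congrArg Subtype.val hrestrict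
  refine hcard.trans_dvd (Nat.factorial_dvd_factorial ?_)
  rwa [← Nat.card_eq_fintype_card, Nat.card_coe_set_eq]

section AgreeingOff

variable {ι : Type*} {X : ι → Type*}

/-- The points of a product that differ from `u` at most in the coordinates in `s`, the cylinder
around `u` with free coordinates `s`. -/
def agreeingOff (u : ∀ i, X i) (s : Finset ι) : Set (∀ i, X i) :=
  {v | ∀ i ∉ s, v i = u i}

theorem range_updateFinset [DecidableEq ι] (u : ∀ i, X i) (s : Finset ι) :
    Set.range (updateFinset u s) = agreeingOff u s := by
  ext v
  constructor
  · rintro ⟨y, rfl⟩ i hi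
    simp [updateFinset, hi]
  · intro hv
    refine ⟨s.restrict v, funext fun i => ?_⟩
    by_cases hi : i ∈ s
    · simp [updateFinset, hi]
    · simp [updateFinset, hi, hv i hi]

theorem finite_agreeingOff (u : ∀ i, X i) (s : Finset ι) [∀ i : s, Finite (X i)] :
    (agreeingOff u s).Finite := by
  classical
  rw [← range_updateFinset]
  exact Set.finite_range _

theorem ncard_agreeingOff_le {M : ℕ} (u : ∀ i, X i) (s : Finset ι) [∀ i : s, Finite (X i)]
    (hM : ∀ i ∈ s, Nat.card (X i) ≤ M) : (agreeingOff u s).ncard ≤ M ^ s.card := by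
  classical
  calc (agreeingOff u s).ncard
      = Nat.card (Set.range (updateFinset u s)) := by rw [range_updateFinset, Nat.card_coe_set_eq]
    _ ≤ Nat.card (∀ i : s, X i) := Finite.card_range_le _
    _ = ∏ i : s, Nat.card (X i) := Nat.card_pi
    _ ≤ M ^ s.card := by
      simpa using Finset.prod_le_pow_card Finset.univ (fun i : s => Nat.card (X i)) M
        fun i _ => hM i i.2

end AgreeingOff

section TreeAut

variable {X : ℕ → Type*} {g : Equiv.Perm (FBoundary X)} {W : Set (FBoundary X)} {u v : FBoundary X}
  {m n : ℕ}

theorem fExtends_wprefix_iff : FExtends v (wprefix u m) ↔ v ∈ cylinder u m :=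
  ⟨fun h i hi => h ⟨i, hi⟩, fun h i => h i i.2⟩

theorem IsTreeAut.apply_mem_cylinder_iff (hg : IsTreeAut g) :
    g v ∈ cylinder (g u) m ↔ v ∈ cylinder u m :=
  (hg m v u).symm

theorem IsTreeAut.disjoint_cylinder_apply (hg : IsTreeAut g) (hW : W ⊆ fixedPoints g)
    (hu : Disjoint (cylinder u m) W) : Disjoint (cylinder (g u) m) W := by
  rw [Set.disjoint_right] at hu ⊢
  intro w hw hmem
  rw [← (hW hw : g w = w), hg.apply_mem_cylinder_iff] at hmem
  exact hu hw hmem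

theorem IsTreeAut.apply_mem_cylinder_of_not_disjoint (hg : IsTreeAut g) (hW : W ⊆ fixedPoints g)
    (hu : ¬Disjoint (cylinder u m) W) : g u ∈ cylinder u m := by
  obtain ⟨w, hwu, hw⟩ := Set.not_disjoint_iff.1 hu
  have hgu : w ∈ cylinder (g u) m := by
    rwa [← (hW hw : g w = w), hg.apply_mem_cylinder_iff]
  rwa [← mem_cylinder_iff_eq.1 hwu, mem_cylinder_comm]

theorem IsBoundedWith.apply_eq_of_disjoint_cylinder (hn : IsBoundedWith g W n)
    (hu : Disjoint (cylinder u m) W) {i : ℕ} (hi : m + n ≤ i) : g u i = u i :=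
  hn m (wprefix u m) (fun _ hw hext => Set.disjoint_right.1 hu hw (fExtends_wprefix_iff.1 hext))
    u (fun _ => rfl) i hi

/-- If `m` is the first level at which `u` leaves `W`, this is a finite set containing the
`g`-orbit of `u` for every `g` that fixes `W` pointwise and is bounded with directions `W` and
depth `n`. The truncated `m - 1` only affects `m = 0`, where no letter is forced by `W`. -/
def exitWindow (W : Set (FBoundary X)) (n : ℕ) (u : FBoundary X) (m : ℕ) : Set (FBoundary X) :=
  agreeingOff u (Finset.Ico (m - 1) (m + n)) ∩ {v | Disjoint (cylinder v m) W}

theorem finite_exitWindow [∀ i, Finite (X i)] : (exitWindow W n u m).Finite :=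
  (finite_agreeingOff u _).subset Set.inter_subset_left

theorem ncard_exitWindow_le [∀ i, Finite (X i)] {M : ℕ} (hM : ∀ i, Nat.card (X i) ≤ M) :
    (exitWindow W n u m).ncard ≤ M ^ (n + 1) := by
  have hM_pos : 0 < M := (Nat.card_pos_iff.2 ⟨⟨u 0⟩, inferInstance⟩).trans_le (hM 0)
  calc (exitWindow W n u m).ncard
      ≤ (agreeingOff u (Finset.Ico (m - 1) (m + n))).ncard :=
        Set.ncard_le_ncard Set.inter_subset_left (finite_agreeingOff u _)
    _ ≤ M ^ (Finset.Ico (m - 1) (m + n)).card := ncard_agreeingOff_le u _ fun i _ => hM i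
    _ ≤ M ^ (n + 1) := Nat.pow_le_pow_right hM_pos (by rw [Nat.card_Ico]; omega)

theorem IsBoundedWith.mapsTo_exitWindow (hn : IsBoundedWith g W n) (hg : IsTreeAut g)
    (hW : W ⊆ fixedPoints g) (hmeet : ∀ k < m, ¬Disjoint (cylinder u k) W) :
    Set.MapsTo g (exitWindow W n u m) (exitWindow W n u m) := by
  rintro v ⟨hvu, hv⟩
  refine ⟨fun i hi => ?_, hg.disjoint_cylinder_apply hW hv⟩
  rw [← hvu i hi]
  obtain hlt | hge : i < m - 1 ∨ m + n ≤ i := by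
    rw [Finset.mem_Ico] at hi
    omega
  · have hmem : v ∈ cylinder u (m - 1) := fun j hj =>
      hvu j fun hj_window => (Finset.mem_Ico.1 hj_window).1.not_gt hj
    have hv_meet : ¬Disjoint (cylinder v (m - 1)) W := by
      rw [mem_cylinder_iff_eq.1 hmem]
      exact hmeet _ (by omega)
    exact hg.apply_mem_cylinder_of_not_disjoint hW hv_meet i hlt
  · exact hn.apply_eq_of_disjoint_cylinder hv hge

theorem IsBoundedWith.isPeriodicPt_factorial [∀ i, Finite (X i)] {M : ℕ}
    (hn : IsBoundedWith g W n) (hM : ∀ i, Nat.card (X i) ≤ M) (hg : IsTreeAut g)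
    (hW : W ⊆ fixedPoints g) (u : FBoundary X) : IsPeriodicPt g (M ^ (n + 1))! u := by
  classical
  by_cases hexit : ∃ m, Disjoint (cylinder u m) W
  · obtain ⟨m, hu, hmeet⟩ :
        ∃ m, Disjoint (cylinder u m) W ∧ ∀ k < m, ¬Disjoint (cylinder u k) W :=
      ⟨Nat.find hexit, Nat.find_spec hexit, fun _ => Nat.find_min hexit⟩
    exact isPeriodicPt_factorial_of_mapsTo finite_exitWindow (ncard_exitWindow_le hM)
      (hn.mapsTo_exitWindow hg hW hmeet) g.injective.injOn ⟨fun _ _ => rfl, hu⟩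
  · have hfixed : IsFixedPt g u := funext fun i =>
      hg.apply_mem_cylinder_of_not_disjoint hW (not_exists.1 hexit (i + 1)) i i.lt_succ_self
    exact hfixed.isPeriodicPt _

end TreeAut

theorem stmt_10_general {X : ℕ → Type*} [∀ i, Finite (X i)] {M : ℕ}
    (hM : ∀ i, Nat.card (X i) ≤ M) {g : Equiv.Perm (FBoundary X)} (hg : IsTreeAut g)
    {W : Set (FBoundary X)} (hW : W ⊆ fixedPoints g) (hbdd : ∃ n, IsBoundedWith g W n) :
    IsOfFinOrder g := by
  obtain ⟨n, hn⟩ := hbdd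
  refine isOfFinOrder_iff_pow_eq_one.2 ⟨(M ^ (n + 1))!, Nat.factorial_pos _, Equiv.ext fun u => ?_⟩
  rw [← Equiv.Perm.iterate_eq_pow, Equiv.Perm.one_apply]
  exact hn.isPeriodicPt_factorial hM hg hW u

/-- Let `𝖷` be a sequence of nonempty finite alphabets with `|X i| ≤ M`
for all `i`, let `w ∈ 𝖷^ω` and let `g` be a bounded automorphism of `𝖷^*` fixing `w` whose
set of directions is contained in `{w}`. Then `g` has finite order. -/
theorem stmt_10 (X : ℕ → Type*) [∀ i, Fintype (X i)] [∀ i, Nonempty (X i)]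
    (M : ℕ) (hM : ∀ i, Fintype.card (X i) ≤ M)
    (g : Equiv.Perm (FBoundary X)) (hg : IsTreeAut g)
    (w : FBoundary X) (hfix : g w = w)
    (hbdd : ∃ n, IsBoundedWith g {w} n) :
    IsOfFinOrder g :=
  stmt_10_general (fun i => Nat.card_eq_fintype_card.trans_le (hM i)) hg
    (Set.singleton_subset_iff.2 hfix) hbdd
end
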